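/- Every biconnected chordal graph satisfies the substructure property. -/

import Mathlib

open SimpleGraph

namespace EVC

variable {V : Type}

/-- `S` is a vertex cover of `G`. -/
def IsCover (G : SimpleGraph V) (S : Set V) : Prop :=
  ∀ ⦃u v : V⦄, G.Adj u v → u ∈ S ∨ v ∈ S

/-- A valid movement of guards from configuration `C` to configuration `C'`, witnessed by a
multiset `M` of (source, target) pairs (a bijection between the two multisets of guards):
every guard either stays in place or moves to an adjacent vertex. -/
def ValidMove (G : SimpleGraph V) (C C' : Multiset V) (M : Multiset (V × V)) : Prop :=
  M.map Prod.fst = C ∧ M.map Prod.snd = C' ∧ ∀ p ∈ M, p.1 = p.2 ∨ G.Adj p.1 p.2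

/-- A defense strategy on `G` with `k` guards: a nonempty family of vertex-cover
configurations of size `k` such that any attack on an edge can be defended by a valid
move staying within the family. -/
def IsDefense (G : SimpleGraph V) (k : ℕ) (F : Set (Multiset V)) : Prop :=
  F.Nonempty ∧
  (∀ C ∈ F, Multiset.card C = k ∧ IsCover G {v | v ∈ C}) ∧
  (∀ C ∈ F, ∀ u v : V, G.Adj u v →
    ∃ C' ∈ F, ∃ M : Multiset (V × V), ValidMove G C C' M ∧ ((u, v) ∈ M ∨ (v, u) ∈ M))

/-- The eternal vertex cover number of `G`. -/
noncomputable def evc (G : SimpleGraph V) : ℕ :=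
  sInf {k | ∃ F : Set (Multiset V), IsDefense G k F}

/-- `evc_S(G)`: the minimum number of guards of a defense strategy on `G` in which every
vertex of `S` is occupied in every configuration. -/
noncomputable def evcOn (G : SimpleGraph V) (S : Set V) : ℕ :=
  sInf {k | ∃ F : Set (Multiset V), IsDefense G k F ∧ ∀ C ∈ F, ∀ s ∈ S, s ∈ C}

/-- `C` is an eternal vertex cover configuration of `G`: it belongs to some defense strategy. -/
def IsEvcConfig (G : SimpleGraph V) (C : Multiset V) : Prop :=
  ∃ (k : ℕ) (F : Set (Multiset V)), IsDefense G k F ∧ C ∈ F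

open Classical in
/-- The number of guards of configuration `C` that lie in the set `S`. -/
noncomputable def guardsOn (C : Multiset V) (S : Set V) : ℕ :=
  Multiset.card (C.filter (fun v => v ∈ S))

/-- `G_x^+`: the graph `G` together with one new vertex (`none`) adjacent only to `x`. -/
def addPendant (G : SimpleGraph V) (x : V) : SimpleGraph (Option V) :=
  SimpleGraph.fromRel (fun a b =>
    (∃ u w : V, a = some u ∧ b = some w ∧ G.Adj u w) ∨ (a = none ∧ b = some x))

/-- The induced subgraph of `G` obtained by deleting the vertex `x`. -/
abbrev delVert (G : SimpleGraph V) (x : V) : SimpleGraph {v : V | v ≠ x} :=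
  G.induce {v : V | v ≠ x}

/-- `x` is a cut vertex of `G`: deleting `x` separates two vertices that were connected. -/
def IsCutVertex (G : SimpleGraph V) (x : V) : Prop :=
  ∃ (u v : V) (hu : u ≠ x) (hv : v ≠ x), G.Reachable u v ∧
    ¬ (delVert G x).Reachable ⟨u, hu⟩ ⟨v, hv⟩

/-- `G` is Type 1 with respect to `x`: `evc(G_x^+) = evc_x(G)`. -/
def Type1 (G : SimpleGraph V) (x : V) : Prop := evc (addPendant G x) = evcOn G {x}

/-- `G` is Type 2 with respect to `x`: `evc(G_x^+) > evc_x(G)`. -/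
def Type2 (G : SimpleGraph V) (x : V) : Prop := evcOn G {x} < evc (addPendant G x)

/-- The vertex set of the `x`-component of `G` corresponding to the connected component `H`
of `G − x`: the vertices of `H` together with `x`. -/
def xCompSet (G : SimpleGraph V) (x : V) (H : (delVert G x).ConnectedComponent) : Set V :=
  insert x (Subtype.val '' H.supp)

lemma x_mem_xCompSet (G : SimpleGraph V) (x : V) (H : (delVert G x).ConnectedComponent) :
    x ∈ xCompSet G x H := Set.mem_insert _ _

/-- `evc_x(G_i)` for the `x`-component `G_i` of `G` corresponding to `H`. -/
noncomputable def evcComp (G : SimpleGraph V) (x : V)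
    (H : (delVert G x).ConnectedComponent) : ℕ :=
  evcOn (G.induce (xCompSet G x H)) {(⟨x, x_mem_xCompSet G x H⟩ : ↥(xCompSet G x H))}

/-- The `x`-component of `G` corresponding to `H` is Type 1 with respect to `x`. -/
def CompType1 (G : SimpleGraph V) (x : V) (H : (delVert G x).ConnectedComponent) : Prop :=
  Type1 (G.induce (xCompSet G x H)) ⟨x, x_mem_xCompSet G x H⟩

/-- The `x`-component of `G` corresponding to `H` is Type 2 with respect to `x`. -/
def CompType2 (G : SimpleGraph V) (x : V) (H : (delVert G x).ConnectedComponent) : Prop :=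
  Type2 (G.induce (xCompSet G x H)) ⟨x, x_mem_xCompSet G x H⟩

/-- The substructure property: for every non-cut vertex `x` of `G` and every `x`-extension
`G'` of `G` (i.e. every connected graph `G'` having `G` as an `x`-component, via an
isomorphism `φ` identifying `x` with a cut vertex `x'` of `G'`), every eternal vertex cover
configuration of `G'` has at least `evc_x(G) − 1` guards on the copy of `V(G)` in case
`evc(G_x^+) ≤ evc_x(G)`, and at least `evc_x(G)` guards on it in case
`evc(G_x^+) > evc_x(G)`. -/
def SubstructureProperty (G : SimpleGraph V) : Prop :=
  ∀ x : V, ¬ IsCutVertex G x →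
  ∀ (V' : Type) [Finite V'], ∀ (G' : SimpleGraph V') (x' : V'),
    G'.Connected → IsCutVertex G' x' →
  ∀ (H : (delVert G' x').ConnectedComponent) (φ : G ≃g G'.induce (xCompSet G' x' H)),
    (φ x : ↥(xCompSet G' x' H)).1 = x' →
  ∀ C' : Multiset V', IsEvcConfig G' C' →
    (evc (addPendant G x) ≤ evcOn G {x} →
        evcOn G {x} - 1 ≤ guardsOn C' (xCompSet G' x' H)) ∧
    (evcOn G {x} < evc (addPendant G x) →
        evcOn G {x} ≤ guardsOn C' (xCompSet G' x' H))

/-- The `x`-component corresponding to `H` is edge-disjoint from (the induced subgraph on)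
the vertex set `S`. -/
def EdgeDisjointComp (G : SimpleGraph V) (S : Set V) (x : V)
    (H : (delVert G x).ConnectedComponent) : Prop :=
  ∀ u v : V, G.Adj u v → u ∈ S → v ∈ S →
    ¬(u ∈ xCompSet G x H ∧ v ∈ xCompSet G x H)

/-- The components attached to the vertex set `S` (of a block or a path): pairs `(x, H)`
with `x ∈ X ∩ S` a cut vertex on `S` and `H` a component of `G − x` whose `x`-component
is edge-disjoint from `S`. -/
def SComponents (G : SimpleGraph V) (X S : Set V) :
    Set (Σ x : V, (delVert G x).ConnectedComponent) :=
  {p | p.1 ∈ X ∧ p.1 ∈ S ∧ EdgeDisjointComp G S p.1 p.2}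

/-- `χ(G, S)` where `S` is the vertex set of a block or a path of `G` and `X` is the set
of cut vertices of `G`. -/
noncomputable def chi (G : SimpleGraph V) (X S : Set V) : ℕ :=
  Nat.card ↥(S ∩ X)
    + ∑ᶠ p ∈ {p ∈ SComponents G X S | CompType1 G p.1 p.2}, (evcComp G p.1 p.2 - 2)
    + ∑ᶠ p ∈ {p ∈ SComponents G X S | CompType2 G p.1 p.2}, (evcComp G p.1 p.2 - 1)

/-- The set `S` induces a block of `G`: a maximal (vertex set of a) connected induced
subgraph having no cut vertex. -/
def IsBlock (G : SimpleGraph V) (S : Set V) : Prop :=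
  (G.induce S).Connected ∧ (∀ y : ↥S, ¬ IsCutVertex (G.induce S) y) ∧
  ∀ T : Set V, S ⊆ T → (G.induce T).Connected →
    (∀ y : ↥T, ¬ IsCutVertex (G.induce T) y) → T ⊆ S

/-- The induced subgraph of `G` on `S` is a cycle: there is a chordless cycle of `G` whose
vertex set is exactly `S`. -/
def IsCycleSet (G : SimpleGraph V) (S : Set V) : Prop :=
  ∃ (a : V) (c : G.Walk a a), c.IsCycle ∧ S = {v | v ∈ c.support} ∧
    ∀ u v : V, u ∈ c.support → v ∈ c.support → G.Adj u v → s(u, v) ∈ c.edges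

/-- `G` is chordal: every cycle of length at least four has a chord. -/
def IsChordal (G : SimpleGraph V) : Prop :=
  ∀ (a : V) (c : G.Walk a a), c.IsCycle → 4 ≤ c.length →
    ∃ u v : V, u ∈ c.support ∧ v ∈ c.support ∧ G.Adj u v ∧ s(u, v) ∉ c.edges

/-- `G` is biconnected (2-connected): connected, at least three vertices, no cut vertex. -/
def IsBiconnected (G : SimpleGraph V) : Prop :=
  G.Connected ∧ 3 ≤ Nat.card V ∧ ∀ x : V, ¬ IsCutVertex G x

/-- `G` is a cactus: connected, and any two distinct simple cycles share at most one vertex. -/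
def IsCactus (G : SimpleGraph V) : Prop :=
  G.Connected ∧
  ∀ (a b : V) (c₁ : G.Walk a a) (c₂ : G.Walk b b), c₁.IsCycle → c₂.IsCycle →
    {e | e ∈ c₁.edges} ≠ {e | e ∈ c₂.edges} →
    {v | v ∈ c₁.support ∧ v ∈ c₂.support}.Subsingleton

/-- `mvc_S(G)`: minimum cardinality of a vertex cover of `G` containing all vertices of `S`. -/
noncomputable def mvcOn (G : SimpleGraph V) (S : Set V) : ℕ :=
  sInf {k | ∃ T : Set V, IsCover G T ∧ S ⊆ T ∧ Nat.card ↥T = k}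

/-- `P` is an induced path of `G`. -/
def IsInducedPath (G : SimpleGraph V) {a b : V} (P : G.Walk a b) : Prop :=
  P.IsPath ∧ ∀ u v : V, u ∈ P.support → v ∈ P.support → G.Adj u v → s(u, v) ∈ P.edges

/-- `P` is obtained by removing one edge from an induced cycle of `G`. -/
def IsInducedCycleMinusEdge (G : SimpleGraph V) {a b : V} (P : G.Walk a b) : Prop :=
  P.IsPath ∧ 2 ≤ P.length ∧ G.Adj a b ∧
    ∀ u v : V, u ∈ P.support → v ∈ P.support → G.Adj u v →
      (s(u, v) ∈ P.edges ∨ s(u, v) = s(a, b))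

open Classical in
/-- `P` is an eventful path of `G` (with `X` the set of cut vertices of `G`): it is an
induced path or an induced cycle minus an edge, its endpoints lie in `X`, and every
(contiguous) subpath of `P` with both endpoints in `X` has an even number of vertices
outside `X`. -/
def Eventful (G : SimpleGraph V) (X : Set V) {a b : V} (P : G.Walk a b) : Prop :=
  (IsInducedPath G P ∨ IsInducedCycleMinusEdge G P) ∧ a ∈ X ∧ b ∈ X ∧
    ∀ i j : Fin P.support.length, (i : ℕ) ≤ (j : ℕ) →
      P.support.get i ∈ X → P.support.get j ∈ X →
      Even (Multiset.countP (fun v => v ∉ X)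
        (((P.support.drop (i : ℕ)).take ((j : ℕ) - (i : ℕ) + 1) : List V) : Multiset V))

/-- The vertex bunch `VB_G(P)` of the path `P`: `V(P)` together with all vertices of the
`P`-components. -/
def vertexBunch (G : SimpleGraph V) (X : Set V) {a b : V} (P : G.Walk a b) : Set V :=
  {v | v ∈ P.support} ∪
    ⋃ p ∈ SComponents G X {v | v ∈ P.support}, xCompSet G p.1 p.2

open Classical in
/-- Local connectivity: neighbours of `i` joined by a walk avoiding `i` are joined inside `S`. -/
lemma local_conn (G : SimpleGraph V) (hch : IsChordal G) (S : Set V) (i : V)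
    (hS : ∀ v, G.Adj i v → v ∈ S) :
    ∀ (n : ℕ) (u w : V) (Q : G.Walk u w), Q.length ≤ n → i ∉ Q.support → G.Adj i u → G.Adj i w →
      ∃ W : G.Walk u w, ∀ v ∈ W.support, v ∈ S := by
  intro n
  induction n using Nat.strong_induction_on with
  | _ n ih =>
  intro u w Q hQ hi hu hw
  have hP : Q.bypass.IsPath := Q.bypass_isPath
  have hPl : Q.bypass.length ≤ n := le_trans Q.length_bypass_le hQ
  have hPi : i ∉ Q.bypass.support := fun h => hi (Q.support_bypass_subset h)
  generalize Q.bypass = P at hP hPl hPi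
  by_cases h0 : P.length = 0
  · have := SimpleGraph.Walk.eq_of_length_eq_zero h0
    subst this
    exact ⟨SimpleGraph.Walk.nil, by simpa using hS _ hu⟩
  by_cases h1 : P.length = 1
  · have hadj := SimpleGraph.Walk.adj_of_length_eq_one h1
    refine ⟨SimpleGraph.Walk.cons hadj SimpleGraph.Walk.nil, ?_⟩
    intro v hv
    simp at hv
    rcases hv with rfl | rfl
    · exact hS _ hu
    · exact hS _ hw
  have hcyc : (SimpleGraph.Walk.cons hu (P.concat hw.symm)).IsCycle := by
    rw [SimpleGraph.Walk.cons_isCycle_iff]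
    refine ⟨hP.concat hPi hw.symm, ?_⟩
    intro he
    rw [SimpleGraph.Walk.edges_concat] at he
    simp only [List.concat_eq_append, List.mem_append, List.mem_singleton] at he
    rcases he with he | he
    · exact hPi (P.fst_mem_support_of_mem_edges he)
    · have : u = w := by
        rw [Sym2.eq_iff] at he
        rcases he with ⟨h, _⟩ | ⟨_, h⟩
        · exact absurd h hw.ne
        · exact h
      subst this
      exact h0 (by rw [SimpleGraph.Walk.isPath_iff_eq_nil.1 hP]; rfl)
  obtain ⟨y, z, hy, hz, hyz, hne⟩ := hch _ _ hcyc (by simp; omega)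
  -- a chord at `i`
  have key1 : ∀ z, z ∈ P.support → G.Adj i z → z ≠ u → z ≠ w →
      ∃ W : G.Walk u w, ∀ v ∈ W.support, v ∈ S := by
    intro z hz hiz hzu hzw
    have hlen := congrArg SimpleGraph.Walk.length (P.take_spec hz)
    rw [SimpleGraph.Walk.length_append] at hlen
    have ht : (P.takeUntil z hz).length ≠ 0 := fun h =>
      hzu (SimpleGraph.Walk.eq_of_length_eq_zero h).symm
    have hd : (P.dropUntil z hz).length ≠ 0 := fun h =>
      hzw (SimpleGraph.Walk.eq_of_length_eq_zero h)
    obtain ⟨W1, hW1⟩ := ih (P.takeUntil z hz).length (by omega) u z _ le_rfl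
      (fun h => hPi (P.support_takeUntil_subset hz h)) hu hiz
    obtain ⟨W2, hW2⟩ := ih (P.dropUntil z hz).length (by omega) z w _ le_rfl
      (fun h => hPi (P.support_dropUntil_subset hz h)) hiz hw
    refine ⟨W1.append W2, ?_⟩
    intro v hv
    rw [SimpleGraph.Walk.mem_support_append_iff] at hv
    exact hv.elim (hW1 v) (hW2 v)
  -- a chord of `P`
  have key2 : ∀ y z (hy : y ∈ P.support) (_ : z ∈ (P.dropUntil y hy).support), G.Adj y z →
      s(y, z) ∉ P.edges → ∃ W : G.Walk u w, ∀ v ∈ W.support, v ∈ S := by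
    intro y z hy hz hyz hne
    have hlen := congrArg SimpleGraph.Walk.length (P.take_spec hy)
    rw [SimpleGraph.Walk.length_append] at hlen
    have hlen2 := congrArg SimpleGraph.Walk.length ((P.dropUntil y hy).take_spec hz)
    rw [SimpleGraph.Walk.length_append] at hlen2
    have ht0 : ((P.dropUntil y hy).takeUntil z hz).length ≠ 0 := fun h =>
      hyz.ne (SimpleGraph.Walk.eq_of_length_eq_zero h)
    have ht1 : ((P.dropUntil y hy).takeUntil z hz).length ≠ 1 := by
      intro h
      apply hne
      apply P.edges_dropUntil_subset hy
      apply (P.dropUntil y hy).edges_takeUntil_subset hz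
      generalize (P.dropUntil y hy).takeUntil z hz = R at h
      cases R with
      | nil => simp at h
      | cons h' R' =>
        rw [SimpleGraph.Walk.length_cons] at h
        have := SimpleGraph.Walk.eq_of_length_eq_zero (p := R') (by omega)
        subst this
        simp
    refine ih ((P.takeUntil y hy).append
      (SimpleGraph.Walk.cons hyz ((P.dropUntil y hy).dropUntil z hz))).length ?_ u w _ le_rfl ?_ hu hw
    · simp only [SimpleGraph.Walk.length_append, SimpleGraph.Walk.length_cons]
      omega
    · intro h
      rw [SimpleGraph.Walk.mem_support_append_iff, SimpleGraph.Walk.support_cons,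
        List.mem_cons] at h
      rcases h with h | h | h
      · exact hPi (P.support_takeUntil_subset hy h)
      · exact hPi (h ▸ hy)
      · exact hPi (P.support_dropUntil_subset hy
          ((P.dropUntil y hy).support_dropUntil_subset hz h))
  simp only [SimpleGraph.Walk.support_cons, SimpleGraph.Walk.support_concat,
    List.concat_eq_append, List.mem_cons, List.mem_append, List.not_mem_nil, or_false] at hy hz
  simp only [SimpleGraph.Walk.edges_cons, SimpleGraph.Walk.edges_concat,
    List.concat_eq_append, List.mem_cons, List.mem_append, List.not_mem_nil, or_false,
    not_or] at hne
  obtain ⟨hne1, hne2, hne3⟩ := hne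
  have hy' : y = i ∨ y ∈ P.support := by tauto
  have hz' : z = i ∨ z ∈ P.support := by tauto
  rcases hy' with rfl | hy'
  · rcases hz' with rfl | hz'
    · exact absurd rfl hyz.ne
    · refine key1 z hz' hyz ?_ ?_
      · rintro rfl; exact hne1 rfl
      · rintro rfl; exact hne3 Sym2.eq_swap
  · rcases hz' with rfl | hz'
    · refine key1 y hy' hyz.symm ?_ ?_
      · rintro rfl; exact hne1 Sym2.eq_swap
      · rintro rfl; exact hne3 rfl
    · by_cases hzd : z ∈ (P.dropUntil y hy').support
      · exact key2 y z hy' hzd hyz hne2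
      · have hzt : z ∈ (P.takeUntil y hy').support := by
          have := hz'
          rw [← P.take_spec hy', SimpleGraph.Walk.mem_support_append_iff] at this
          tauto
        refine key2 z y hz' ?_ hyz.symm (by rwa [Sym2.eq_swap])
        have hyP : y ∈ P.support := hy'
        by_contra hyd
        -- `y` occurs before `z`, and `z` before `y`
        have hyt : y ∈ (P.takeUntil z hz').support := by
          have := hyP
          rw [← P.take_spec hz', SimpleGraph.Walk.mem_support_append_iff] at this
          tauto
        have l1 := SimpleGraph.Walk.length_takeUntil_lt hzt hyz.ne.symm
        have l2 := SimpleGraph.Walk.length_takeUntil_lt hyt hyz.ne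
        rw [SimpleGraph.Walk.takeUntil_takeUntil] at l1 l2
        omega

/-- In a biconnected chordal graph every vertex cover induces a connected subgraph. -/
lemma cover_conn (G : SimpleGraph V) (hch : IsChordal G) (hcut : ∀ x : V, ¬ IsCutVertex G x)
    (S : Set V) (hS : IsCover G S) :
    ∀ (n : ℕ) (a b : V) (Q : G.Walk a b), Q.length ≤ n → a ∈ S → b ∈ S →
      ∃ W : G.Walk a b, ∀ v ∈ W.support, v ∈ S := by
  intro n
  induction n using Nat.strong_induction_on with
  | _ n ih =>
  intro a b Q hQ ha hb
  cases Q with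
  | nil => exact ⟨SimpleGraph.Walk.nil, by simpa using ha⟩
  | @cons _ c _ h Q' =>
    rw [SimpleGraph.Walk.length_cons] at hQ
    by_cases hc : c ∈ S
    · obtain ⟨W, hW⟩ := ih Q'.length (by omega) c b Q' le_rfl hc hb
      refine ⟨SimpleGraph.Walk.cons h W, ?_⟩
      intro v hv
      rw [SimpleGraph.Walk.support_cons, List.mem_cons] at hv
      rcases hv with rfl | hv
      · exact ha
      · exact hW v hv
    · cases Q' with
      | nil => exact absurd hb hc
      | @cons _ d _ h2 Q2 =>
        rw [SimpleGraph.Walk.length_cons] at hQ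
        have hN : ∀ v, G.Adj c v → v ∈ S := fun v hv => (hS hv).resolve_left hc
        have hd := hN d h2
        obtain ⟨W, hW⟩ := ih Q2.length (by omega) d b Q2 le_rfl hd hb
        have hr : (delVert G c).Reachable ⟨a, h.ne⟩ ⟨d, h2.ne.symm⟩ := by
          by_contra hr
          exact hcut c ⟨a, d, h.ne, h2.ne.symm, h.reachable.trans h2.reachable, hr⟩
        obtain ⟨R⟩ := hr
        obtain ⟨W1, hW1⟩ := local_conn G hch S c hN _ a d
          (R.map (SimpleGraph.Embedding.induce _).toHom) le_rfl (by
            intro hmem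
            have hmem' := (congrArg (c ∈ ·) (SimpleGraph.Walk.support_map
              (SimpleGraph.Embedding.induce _).toHom R)).mp hmem
            obtain ⟨q, _, hq⟩ := List.mem_map.1 hmem'
            exact q.2 hq) h.symm h2
        refine ⟨W1.append W, ?_⟩
        intro v hv
        rw [SimpleGraph.Walk.mem_support_append_iff] at hv
        exact hv.elim (hW1 v) (hW v)

open Classical in
/-- A connected dominating vertex cover `S` with one extra guard is a defense. -/
lemma defense_of_conn {W : Type} (H : SimpleGraph W) (S : Finset W) (hne : S.Nonempty)
    (hS : IsCover H {v | v ∈ S})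
    (hconn : ∀ a ∈ S, ∀ b ∈ S, ∃ P : H.Walk a b, ∀ v ∈ P.support, v ∈ S)
    (hdom : ∀ w, w ∈ S ∨ ∃ s ∈ S, H.Adj w s) :
    IsDefense H (S.card + 1) {C | ∃ w, C = w ::ₘ S.val} := by
  refine ⟨⟨hne.choose ::ₘ S.val, _, rfl⟩, ?_, ?_⟩
  · rintro C ⟨w, rfl⟩
    refine ⟨by simp, ?_⟩
    intro u v huv
    rcases hS huv with h | h
    · left; exact Multiset.mem_cons_of_mem h
    · right; exact Multiset.mem_cons_of_mem h
  · have main : ∀ w u v, u ∈ S → H.Adj u v → ∃ C' ∈ {C | ∃ w, C = w ::ₘ S.val},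
        ∃ M : Multiset (W × W), ValidMove H (w ::ₘ S.val) C' M ∧ (u, v) ∈ M := by
      intro w u v hu huv
      by_cases hv : v ∈ w ::ₘ S.val
      · refine ⟨w ::ₘ S.val, ⟨w, rfl⟩, ?_⟩
        obtain ⟨D, hD⟩ := Multiset.exists_cons_of_mem hv
        have huC : u ∈ w ::ₘ S.val := Multiset.mem_cons_of_mem hu
        have huD : u ∈ D := by
          rw [hD, Multiset.mem_cons] at huC
          exact huC.resolve_left huv.ne
        obtain ⟨E, rfl⟩ := Multiset.exists_cons_of_mem huD
        refine ⟨(u, v) ::ₘ (v, u) ::ₘ E.map (fun a => (a, a)), ⟨?_, ?_, ?_⟩, by simp⟩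
        · simp [hD, Multiset.cons_swap u v]
        · simp [hD]
        · intro p hp
          simp only [Multiset.mem_cons, Multiset.mem_map] at hp
          rcases hp with rfl | rfl | ⟨a, _, rfl⟩
          · exact Or.inr huv
          · exact Or.inr huv.symm
          · exact Or.inl rfl
      · refine ⟨v ::ₘ S.val, ⟨v, rfl⟩, ?_⟩
        have hwalk : ∃ P : H.Walk w u, ∀ z ∈ P.support, z = w ∨ z ∈ S := by
          rcases hdom w with hw | ⟨s, hs, hws⟩
          · obtain ⟨P, hP⟩ := hconn w hw u hu
            exact ⟨P, fun z hz => Or.inr (hP z hz)⟩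
          · obtain ⟨P, hP⟩ := hconn s hs u hu
            refine ⟨SimpleGraph.Walk.cons hws P, fun z hz => ?_⟩
            rw [SimpleGraph.Walk.support_cons, List.mem_cons] at hz
            exact hz.imp id (hP z)
        obtain ⟨P0, hP0⟩ := hwalk
        have hP : P0.bypass.IsPath := P0.bypass_isPath
        have hPS : ∀ z ∈ P0.bypass.support, z = w ∨ z ∈ S :=
          fun z hz => hP0 z (P0.support_bypass_subset hz)
        generalize P0.bypass = P at hP hPS
        have hnd : P.support.Nodup := hP.support_nodup
        have hsup : P.support = w :: P.support.tail := P.support_eq_cons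
        have hle : (P.support.tail : Multiset W) ≤ S.val := by
          rw [hsup, List.nodup_cons] at hnd
          rw [Multiset.le_iff_subset (Multiset.coe_nodup.2 hnd.2)]
          intro z hz
          have hz' : z ∈ P.support.tail := hz
          refine (hPS z (List.mem_of_mem_tail hz')).resolve_left ?_
          rintro rfl
          exact hnd.1 hz'
        obtain ⟨R, hR⟩ := Multiset.le_iff_exists_add.1 hle
        refine ⟨((P.concat huv).darts.map (fun d => d.toProd) : List (W × W)) +
          R.map (fun a => (a, a)), ⟨?_, ?_, ?_⟩, ?_⟩
        · have h1 : ((P.concat huv).darts.map (fun d => d.toProd)).map Prod.fst = P.support := by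
            rw [List.map_map]
            have := (P.concat huv).map_fst_darts
            rw [SimpleGraph.Walk.support_concat] at this
            simpa [List.concat_eq_append, Function.comp_def] using this
          rw [Multiset.map_add, Multiset.map_coe, h1, Multiset.map_map, hR,
            ← Multiset.cons_add, Multiset.cons_coe, ← hsup]
          simp
        · have h1 : ((P.concat huv).darts.map (fun d => d.toProd)).map Prod.snd
              = P.support.tail ++ [v] := by
            rw [List.map_map]
            have := (P.concat huv).map_snd_darts
            rw [SimpleGraph.Walk.support_concat, hsup] at this
            simpa [List.concat_eq_append, Function.comp_def] using this
          rw [Multiset.map_add, Multiset.map_coe, h1, Multiset.map_map, hR,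
            ← Multiset.coe_add, add_right_comm]
          simp [← Multiset.singleton_add, add_comm, add_left_comm]
        · intro p hp
          rw [Multiset.mem_add] at hp
          rcases hp with hp | hp
          · rw [Multiset.mem_coe] at hp
            obtain ⟨d, _, rfl⟩ := List.mem_map.1 hp
            exact Or.inr d.adj
          · obtain ⟨a, _, rfl⟩ := Multiset.mem_map.1 hp
            exact Or.inl rfl
        · rw [Multiset.mem_add]
          left
          rw [Multiset.mem_coe, SimpleGraph.Walk.darts_concat]
          simp [List.concat_eq_append]
    rintro C ⟨w, rfl⟩ u v huv
    rcases hS huv with h | h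
    · obtain ⟨C', hC', M, hM, hm⟩ := main w u v h huv
      exact ⟨C', hC', M, hM, Or.inl hm⟩
    · obtain ⟨C', hC', M, hM, hm⟩ := main w v u h huv.symm
      exact ⟨C', hC', M, hM, Or.inr hm⟩

lemma addPendant_some {G : SimpleGraph V} {x u v : V} (h : G.Adj u v) :
    (addPendant G x).Adj (some u) (some v) := by
  rw [addPendant, SimpleGraph.fromRel_adj]
  exact ⟨by simpa using h.ne, Or.inl (Or.inl ⟨u, v, rfl, rfl, h⟩)⟩

lemma addPendant_none (G : SimpleGraph V) (x : V) : (addPendant G x).Adj none (some x) := by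
  rw [addPendant, SimpleGraph.fromRel_adj]
  exact ⟨by simp, Or.inl (Or.inr ⟨rfl, rfl⟩)⟩

open Classical in
/-- Guards of an eternal vertex cover configuration on an `x`-component. -/
lemma guards_lower [Fintype V] (G : SimpleGraph V) (x c : V) (hxc : G.Adj x c) (m : ℕ)
    (hm : ∀ T : Finset V, x ∈ T → IsCover G {v | v ∈ T} → m ≤ T.card)
    {V' : Type} (G' : SimpleGraph V') (x' : V')
    (H : (delVert G' x').ConnectedComponent) (φ : G ≃g G'.induce (xCompSet G' x' H))
    (hφ : (φ x : ↥(xCompSet G' x' H)).1 = x') (C : Multiset V') (hC : IsEvcConfig G' C) :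
    m ≤ guardsOn C (xCompSet G' x' H) := by
  obtain ⟨k, F, ⟨-, hF, hmove⟩, hCF⟩ := hC
  have hinj : Function.Injective (fun v : V => (φ v).1) :=
    fun a b h => φ.injective (Subtype.ext h)
  -- a configuration in `F` occupying `x'`
  have hocc : ∀ D ∈ F, x' ∈ D →
      ∃ T : Finset V', x' ∈ T ∧ (∀ v ∈ T, v ∈ D ∧ v ∈ xCompSet G' x' H) ∧ m ≤ T.card := by
    intro D hD hx
    refine ⟨(Finset.univ.filter (fun v : V => (φ v).1 ∈ D)).image (fun v : V => (φ v).1),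
      ?_, ?_, ?_⟩
    · simp only [Finset.mem_image, Finset.mem_filter, Finset.mem_univ, true_and]
      exact ⟨x, by rw [hφ]; exact hx, hφ⟩
    · intro v hv
      simp only [Finset.mem_image, Finset.mem_filter, Finset.mem_univ, true_and] at hv
      obtain ⟨a, ha, rfl⟩ := hv
      exact ⟨ha, (φ a).2⟩
    · rw [Finset.card_image_of_injective _ hinj]
      apply hm
      · simp only [Finset.mem_filter, Finset.mem_univ, true_and]
        rw [hφ]; exact hx
      · intro u v huv
        have := (hF D hD).2 (show G'.Adj (φ u).1 (φ v).1 from φ.map_adj_iff.2 huv)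
        simpa using this
  by_cases hx : x' ∈ C
  · obtain ⟨T, -, hT, hmT⟩ := hocc C hCF hx
    refine hmT.trans ?_
    rw [guardsOn]
    refine Multiset.card_le_card (s := T.val) ?_
    rw [Multiset.le_iff_subset T.nodup]
    intro v hv
    rw [Multiset.mem_filter]
    exact hT v hv
  · have hadj : G'.Adj x' (φ c).1 := by
      have : G'.Adj (φ x).1 (φ c).1 := φ.map_adj_iff.2 hxc
      rwa [hφ] at this
    obtain ⟨D, hD, M, ⟨hM1, hM2, hM3⟩, hatt⟩ := hmove C hCF _ _ hadj
    have hatt' : ((φ c).1, x') ∈ M := by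
      rcases hatt with h | h
      · exact absurd (hM1 ▸ Multiset.mem_map_of_mem Prod.fst h) hx
      · exact h
    obtain ⟨T, hxT, hT, hmT⟩ := hocc D hD (hM2 ▸ Multiset.mem_map_of_mem Prod.snd hatt')
    obtain ⟨N, rfl⟩ := Multiset.exists_cons_of_mem hatt'
    have hclosed : ∀ u v : V', v ∈ xCompSet G' x' H → v ≠ x' → G'.Adj u v →
        u ∈ xCompSet G' x' H := by
      intro u v hv hvx huv
      by_cases hux : u = x'
      · rw [hux]; exact x_mem_xCompSet _ _ _
      · right
        rcases hv with hv | ⟨⟨v', hv'⟩, hvH, rfl⟩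
        · exact absurd hv hvx
        · refine ⟨⟨u, hux⟩, ?_, rfl⟩
          rw [SimpleGraph.ConnectedComponent.mem_supp_iff] at hvH ⊢
          rw [← hvH]
          apply SimpleGraph.ConnectedComponent.sound
          exact SimpleGraph.Adj.reachable (by simpa using huv)
    have hc1 : T.card - 1 ≤ Multiset.card
        (N.filter (fun p => p.2 ∈ xCompSet G' x' H ∧ p.2 ≠ x')) := by
      rw [← Finset.card_erase_of_mem hxT, ← Multiset.card_map Prod.snd]
      refine Multiset.card_le_card (s := (T.erase x').val) ?_
      rw [Multiset.le_iff_subset (T.erase x').nodup]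
      intro v hv
      have hv' : v ∈ T.erase x' := hv
      rw [Finset.mem_erase] at hv'
      obtain ⟨h1, h2⟩ := hT v hv'.2
      rw [← hM2] at h1
      simp only [Multiset.map_cons, Multiset.mem_cons] at h1
      obtain ⟨p, hp, rfl⟩ := Multiset.mem_map.1 (h1.resolve_left hv'.1)
      exact Multiset.mem_map_of_mem _ (Multiset.mem_filter.2 ⟨hp, h2, hv'.1⟩)
    have hc2 : Multiset.card (N.filter (fun p => p.2 ∈ xCompSet G' x' H ∧ p.2 ≠ x')) ≤
        Multiset.card (N.filter (fun p => p.1 ∈ xCompSet G' x' H)) := by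
      refine Multiset.card_le_card ?_
      rw [Multiset.le_filter]
      refine ⟨Multiset.filter_le _ _, ?_⟩
      intro p hp
      rw [Multiset.mem_filter] at hp
      rcases hM3 p (Multiset.mem_cons_of_mem hp.1) with h | h
      · rw [h]; exact hp.2.1
      · exact hclosed _ _ hp.2.1 hp.2.2 h
    have hc3 : guardsOn C (xCompSet G' x' H) =
        Multiset.card (N.filter (fun p => p.1 ∈ xCompSet G' x' H)) + 1 := by
      rw [guardsOn, ← hM1, Multiset.map_cons, Multiset.filter_cons_of_pos _ (φ c).2,
        Multiset.card_cons, Multiset.filter_map, Multiset.card_map]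
      rfl
    omega

/-- Every biconnected chordal graph satisfies the substructure property. -/
theorem biconnected_chordal_substructure (V : Type) [Finite V] (G : SimpleGraph V)
    (hbi : IsBiconnected G) (hch : IsChordal G) : SubstructureProperty G := by
  classical
  have := Fintype.ofFinite V
  obtain ⟨hconn, hcard, hcut⟩ := hbi
  intro x _ V' _ G' x' _ _ H φ hφ C' hC'
  -- a minimum vertex cover containing `x`
  obtain ⟨S, hSmem, hSmin⟩ := Finset.exists_min_image
    (Finset.univ.filter (fun T : Finset V => x ∈ T ∧ IsCover G {v | v ∈ T})) Finset.card
    ⟨Finset.univ, by simp [IsCover]⟩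
  simp only [Finset.mem_filter, Finset.mem_univ, true_and] at hSmem hSmin
  obtain ⟨hxS, hS⟩ := hSmem
  have hnt : Nontrivial V := by
    rw [Nat.card_eq_fintype_card] at hcard
    exact Fintype.one_lt_card_iff_nontrivial.1 (by omega)
  have hnbr : ∀ w, ∃ c, G.Adj w c := fun w => hconn.preconnected.exists_adj_of_nontrivial w
  have hSconn : ∀ a ∈ S, ∀ b ∈ S, ∃ P : G.Walk a b, ∀ v ∈ P.support, v ∈ S := by
    intro a ha b hb
    obtain ⟨Q⟩ := hconn.preconnected a b
    exact cover_conn G hch hcut {v | v ∈ S} hS _ a b Q le_rfl ha hb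
  have hdom : ∀ w, w ∈ S ∨ ∃ s ∈ S, G.Adj w s := by
    intro w
    obtain ⟨c, hc⟩ := hnbr w
    exact (hS hc).imp id (fun h => ⟨c, h, hc⟩)
  have hA : evcOn G {x} ≤ S.card + 1 := by
    apply Nat.sInf_le
    refine ⟨_, defense_of_conn G S ⟨x, hxS⟩ hS hSconn hdom, ?_⟩
    rintro C ⟨w, rfl⟩ s rfl
    exact Multiset.mem_cons_of_mem hxS
  have hB : evc (addPendant G x) ≤ S.card + 1 := by
    apply Nat.sInf_le
    have hc : (S.map Function.Embedding.some).card = S.card := Finset.card_map _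
    rw [← hc]
    refine ⟨_, defense_of_conn _ (S.map Function.Embedding.some) ⟨some x, by simpa using hxS⟩
      ?_ ?_ ?_⟩
    · intro u v huv
      rw [addPendant, SimpleGraph.fromRel_adj] at huv
      rcases huv.2 with (⟨a, b, rfl, rfl, h⟩ | ⟨rfl, rfl⟩) | (⟨a, b, rfl, rfl, h⟩ | ⟨rfl, rfl⟩)
      · simpa using hS h
      · right; simpa using hxS
      · simpa [or_comm] using hS h
      · left; simpa using hxS
    · intro a ha b hb
      simp only [Finset.mem_map, Function.Embedding.some_apply] at ha hb
      obtain ⟨a, ha, rfl⟩ := ha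
      obtain ⟨b, hb, rfl⟩ := hb
      obtain ⟨P, hP⟩ := hSconn a ha b hb
      let f : G →g addPendant G x := ⟨some, fun h => addPendant_some h⟩
      refine ⟨P.map f, ?_⟩
      intro v hv
      rw [SimpleGraph.Walk.support_map] at hv
      obtain ⟨q, hq, rfl⟩ := List.mem_map.1 hv
      exact Finset.mem_map_of_mem _ (hP q hq)
    · intro w
      cases w with
      | none => exact Or.inr ⟨some x, by simpa using hxS, addPendant_none G x⟩
      | some w =>
        rcases hdom w with h | ⟨s, hs, h⟩
        · left; simpa using h
        · exact Or.inr ⟨some s, by simpa using hs, addPendant_some h⟩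
  obtain ⟨c, hc⟩ := hnbr x
  have hL := guards_lower G x c hc S.card (fun T h1 h2 => hSmin T ⟨h1, h2⟩) G' x' H φ hφ C' hC'
  constructor
  · intro _; omega
  · intro _; omega

end EVC
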